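/- Let R be a unital non-associative ring, σ : R → R an additive surjection with σ(1) = 1, and δ : R → R an additive map with δ(1) = 0. For a non-zero right ideal I of R[X;σ,δ], the set J consisting of 0 together with all leading coefficients of non-zero elements of I, i.e. J = { r ∈ R : r X^d + r_{d−1} X^{d−1} + ⋯ + r_0 ∈ I for some d ∈ ℕ and r_{d−1},…,r_0 ∈ R }, is a right ideal of R. -/

import Mathlib

/-! Multiplying a polynomial `p` of degree at most `d` on the right by a monomial `s Xⁿ` gives a
polynomial of degree at most `d + n` whose coefficient at `d + n` is `p_d σ^d(s)`
(`oreMul_single_top`), because `π_d^d = σ^d` and `π_i^m = 0` for `i > m`.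

With `s = 1` this says that multiplying by `Xⁿ` raises the degree without changing the leading
coefficient (as `σ 1 = 1`), so two elements of `I` can be brought to the same degree and added.
With `n = 0` and `s` chosen so that `σ^d(s) = a`, which is possible as `σ` is surjective, it turns
the leading coefficient `r` into `r a`. -/

/-- A left ideal of a (possibly non-associative, non-unital) multiplication `mul` on an
additive group `S`: an additive subgroup closed under left multiplication by arbitrary
elements of `S`. -/
def IsLeftIdealSet {S : Type*} [AddCommGroup S] (mul : S → S → S) (I : Set S) : Prop :=
  (0 : S) ∈ I ∧ (∀ a ∈ I, ∀ b ∈ I, a + b ∈ I) ∧ (∀ a ∈ I, -a ∈ I) ∧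
    ∀ s : S, ∀ a ∈ I, mul s a ∈ I

/-- A right ideal of a (possibly non-associative, non-unital) multiplication `mul` on an
additive group `S`: an additive subgroup closed under right multiplication by arbitrary
elements of `S`. -/
def IsRightIdealSet {S : Type*} [AddCommGroup S] (mul : S → S → S) (I : Set S) : Prop :=
  (0 : S) ∈ I ∧ (∀ a ∈ I, ∀ b ∈ I, a + b ∈ I) ∧ (∀ a ∈ I, -a ∈ I) ∧
    ∀ s : S, ∀ a ∈ I, mul a s ∈ I

/-- Left Noetherian: the ascending chain condition on left ideals. -/
def LeftNoetherianMul {S : Type*} [AddCommGroup S] (mul : S → S → S) : Prop :=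
  ∀ f : ℕ → Set S, (∀ n, IsLeftIdealSet mul (f n)) → (∀ n, f n ⊆ f (n + 1)) →
    ∃ N, ∀ m, N ≤ m → f m = f N

/-- Right Noetherian: the ascending chain condition on right ideals. -/
def RightNoetherianMul {S : Type*} [AddCommGroup S] (mul : S → S → S) : Prop :=
  ∀ f : ℕ → Set S, (∀ n, IsRightIdealSet mul (f n)) → (∀ n, f n ⊆ f (n + 1)) →
    ∃ N, ∀ m, N ≤ m → f m = f N

/-- `piMap σ δ m i` is the map `π_i^m`, the sum of all `(m choose i)` possible
compositions of `i` copies of `σ` and `m − i` copies of `δ`; it is `0` when `m < i`. -/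
def piMap {R : Type*} [NonAssocRing R] (σ δ : R → R) : ℕ → ℕ → R → R
  | 0, 0 => id
  | 0, _ + 1 => fun _ => 0
  | m + 1, 0 => fun r => δ (piMap σ δ m 0 r)
  | m + 1, i + 1 => fun r => σ (piMap σ δ m i r) + δ (piMap σ δ m (i + 1) r)

/-- The multiplication of the non-associative Ore extension `R[X;σ,δ]`, on the additive
group `ℕ →₀ R` of polynomials `Σ rᵢ Xⁱ`:
`(r X^m)(s X^n) = Σᵢ (r π_i^m(s)) X^{i+n}` (the terms with `i > m` vanish). -/
noncomputable def oreMul {R : Type*} [NonAssocRing R] (σ δ : R → R)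
    (p q : ℕ →₀ R) : ℕ →₀ R :=
  p.sum fun m r => q.sum fun n s =>
    ∑ i ∈ Finset.range (m + 1), Finsupp.single (i + n) (r * piMap σ δ m i s)

theorem piMap_eq_zero_of_lt {R : Type*} [NonAssocRing R] (σ δ : R → R)
    (hσ0 : σ 0 = 0) (hδ0 : δ 0 = 0) (m : ℕ) :
    ∀ i : ℕ, m < i → ∀ r : R, piMap σ δ m i r = 0 := by
  induction m with
  | zero =>
    rintro (_ | i) hi r
    · omega
    · rfl
  | succ m ih =>
    rintro (_ | i) hi r
    · omega
    · simp only [piMap]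
      rw [ih i (by omega), ih (i + 1) (by omega), hσ0, hδ0, add_zero]

theorem piMap_self {R : Type*} [NonAssocRing R] (σ δ : R → R)
    (hσ0 : σ 0 = 0) (hδ0 : δ 0 = 0) (m : ℕ) (r : R) :
    piMap σ δ m m r = σ^[m] r := by
  induction m with
  | zero => rfl
  | succ m ih =>
    simp only [piMap]
    rw [ih, piMap_eq_zero_of_lt σ δ hσ0 hδ0 m (m + 1) (by omega), hδ0, add_zero,
      Function.iterate_succ_apply']

theorem piMap_zero {R : Type*} [NonAssocRing R] (σ δ : R → R)
    (hσ0 : σ 0 = 0) (hδ0 : δ 0 = 0) (m : ℕ) :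
    ∀ i : ℕ, piMap σ δ m i 0 = 0 := by
  induction m with
  | zero => rintro (_ | i) <;> rfl
  | succ m ih => rintro (_ | i) <;> simp [piMap, ih, hσ0, hδ0]

theorem oreMul_single_apply {R : Type*} [NonAssocRing R] (σ δ : R → R)
    (hσ0 : σ 0 = 0) (hδ0 : δ 0 = 0) (p : ℕ →₀ R) (n : ℕ) (s : R) (j : ℕ) :
    oreMul σ δ p (Finsupp.single n s) j =
      ∑ m ∈ p.support, ∑ i ∈ Finset.range (m + 1),
        if i + n = j then p m * piMap σ δ m i s else 0 := by
  unfold oreMul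
  rw [Finsupp.sum, Finsupp.finsetSum_apply]
  refine Finset.sum_congr rfl fun m _ => ?_
  have h := Finsupp.sum_single_index (a := n) (b := s)
    (h := fun n s => ∑ i ∈ Finset.range (m + 1),
      Finsupp.single (i + n) (p m * piMap σ δ m i s))
    (by simp [piMap_zero σ δ hσ0 hδ0])
  rw [h, Finsupp.finsetSum_apply]
  exact Finset.sum_congr rfl fun i _ => Finsupp.single_apply

/-- The product of a polynomial of degree at most `d` with `s Xⁿ` has degree at most `d + n` and
coefficient `p_d σ^d(s)` there. -/
theorem oreMul_single_top {R : Type*} [NonAssocRing R] (σ δ : R → R)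
    (hσ0 : σ 0 = 0) (hδ0 : δ 0 = 0) (p : ℕ →₀ R) (d n : ℕ) (s : R)
    (hp : ∀ i : ℕ, d < i → p i = 0) :
    oreMul σ δ p (Finsupp.single n s) (d + n) = p d * σ^[d] s ∧
      ∀ j : ℕ, d + n < j → oreMul σ δ p (Finsupp.single n s) j = 0 := by
  have hsupp : ∀ m ∈ p.support, m ≤ d := fun m hm => by
    by_contra h
    exact Finsupp.mem_support_iff.mp hm (hp m (by omega))
  constructor
  · rw [oreMul_single_apply σ δ hσ0 hδ0, Finset.sum_eq_single d]
    · rw [Finset.sum_eq_single d]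
      · rw [if_pos rfl, piMap_self σ δ hσ0 hδ0]
      · intro i _ hi
        exact if_neg (by omega)
      · intro h
        simp at h
    · intro m hm hmd
      have := hsupp m hm
      refine Finset.sum_eq_zero fun i hi => if_neg ?_
      have := Finset.mem_range.mp hi
      omega
    · intro h
      simp [Finsupp.notMem_support_iff.mp h]
  · intro j hj
    rw [oreMul_single_apply σ δ hσ0 hδ0]
    refine Finset.sum_eq_zero fun m hm => Finset.sum_eq_zero fun i hi => if_neg ?_
    have := hsupp m hm
    have := Finset.mem_range.mp hi
    omega

/-- For a non-zero right ideal `I` of the non-associative Ore extension `R[X;σ,δ]`, the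
set `J` of `0` together with all leading coefficients of non-zero elements of `I`, i.e.
`J = { r ∈ R : r X^d + r_{d−1} X^{d−1} + ⋯ + r₀ ∈ I for some d and rᵢ }`, is a right
ideal of `R`. -/
theorem ore_leadingCoeffs_isRightIdeal {R : Type*} [NonAssocRing R] (σ δ : R → R)
    (hσadd : ∀ a b : R, σ (a + b) = σ a + σ b) (hσsurj : Function.Surjective σ)
    (hσ1 : σ 1 = 1) (hδadd : ∀ a b : R, δ (a + b) = δ a + δ b) (hδ1 : δ 1 = 0)
    (I : Set (ℕ →₀ R)) (hI : IsRightIdealSet (oreMul σ δ) I) (hI0 : I ≠ {0}) :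
    IsRightIdealSet (fun a b : R => a * b)
      { r : R | ∃ d : ℕ, ∃ p ∈ I, p d = r ∧ ∀ i : ℕ, d < i → p i = 0 } := by
  have hσ0 : σ 0 = 0 := by simpa using hσadd 0 0
  have hδ0 : δ 0 = 0 := by simpa using hδadd 0 0
  obtain ⟨h0, hadd, hneg, hmul⟩ := hI
  have hshift : ∀ (p : ℕ →₀ R) (d n : ℕ), p ∈ I → (∀ i : ℕ, d < i → p i = 0) →
      ∃ q ∈ I, q (d + n) = p d ∧ ∀ i : ℕ, d + n < i → q i = 0 := by
    intro p d n hpI hp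
    obtain ⟨htop, hbig⟩ := oreMul_single_top σ δ hσ0 hδ0 p d n 1 hp
    refine ⟨_, hmul (Finsupp.single n 1) p hpI, ?_, hbig⟩
    rw [htop, Function.iterate_fixed hσ1, mul_one]
  refine ⟨⟨0, 0, h0, rfl, fun _ _ => rfl⟩, ?_, ?_, ?_⟩
  · rintro _ ⟨d, p, hpI, rfl, hp⟩ _ ⟨e, q, hqI, rfl, hq⟩
    obtain ⟨p', hpI', hp1, hp2⟩ := hshift p d e hpI hp
    obtain ⟨q', hqI', hq1, hq2⟩ := hshift q e d hqI hq
    rw [add_comm e d] at hq1 hq2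
    refine ⟨d + e, p' + q', hadd _ hpI' _ hqI', ?_, fun i hi => ?_⟩
    · rw [Finsupp.add_apply, hp1, hq1]
    · rw [Finsupp.add_apply, hp2 i hi, hq2 i hi, add_zero]
  · rintro _ ⟨d, p, hpI, rfl, hp⟩
    exact ⟨d, -p, hneg p hpI, rfl, fun i hi => by rw [Finsupp.neg_apply, hp i hi, neg_zero]⟩
  · rintro a _ ⟨d, p, hpI, rfl, hp⟩
    obtain ⟨s, rfl⟩ := hσsurj.iterate d a
    obtain ⟨htop, hbig⟩ := oreMul_single_top σ δ hσ0 hδ0 p d 0 s hp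
    exact ⟨d, _, hmul (Finsupp.single 0 s) p hpI, htop, hbig⟩
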